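/- Let R be a Gorenstein commutative Noetherian ring, N a finitely generated R-module, and t a natural number. Then: (i) Supp Ext^t_R(N, R) ⊆ Supp N, and every prime in Supp Ext^t_R(N, R) has height at least t; (ii) for every prime ideal p that is a minimal element of Supp N, one has p ∈ Supp Ext^t_R(N, R) if and only if ht p = t. -/

import Mathlib

/-!
STATEMENT 9: Let R be a Gorenstein commutative Noetherian ring, N a finitely generated
R-module, and t a natural number. Then:
(i) Supp Ext^t_R(N, R) ⊆ Supp N, and every prime in Supp Ext^t_R(N, R) has height at least t;
(ii) for every prime ideal p that is a minimal element of Supp N, one has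
p ∈ Supp Ext^t_R(N, R) if and only if ht p = t.
-/

open CategoryTheory Opposite

noncomputable section

universe u

/-- The `t`-th Ext group `Ext_R^t(N, R)`, as an `R`-module. -/
abbrev extPow (R : Type u) [CommRing R] (N : Type u) [AddCommGroup N] [Module R N]
    (t : ℕ) : ModuleCat.{u} R :=
  ((_root_.Ext.{u} R (ModuleCat.{u} R) t).obj (op (ModuleCat.of R N))).obj (ModuleCat.of R R)

/-- `A` has finite injective dimension as a module over itself. -/
def HasFiniteSelfInjDim (A : Type u) [CommRing A] : Prop :=
  ∃ n : ℕ, ∀ (M : ModuleCat.{u} A) (i : ℕ), n < i →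
    Subsingleton (((_root_.Ext.{u} A (ModuleCat.{u} A) i).obj (op M)).obj (ModuleCat.of A A))

/-- A Gorenstein (commutative Noetherian) local ring. -/
def IsGorensteinLocalRing (A : Type u) [CommRing A] : Prop :=
  IsNoetherianRing A ∧ IsLocalRing A ∧ HasFiniteSelfInjDim A

/-- A commutative Noetherian ring is Gorenstein if all its localizations at primes are
Gorenstein local rings. -/
def IsGorensteinRing (R : Type u) [CommRing R] : Prop :=
  ∀ (p : Ideal R) [p.IsPrime], IsGorensteinLocalRing (Localization.AtPrime p)

namespace GorExt

section Basic

variable (R : Type u) [CommRing R]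

/-- Ext into the ring, via the derived category. -/
abbrev E (M : Type u) [AddCommGroup M] [Module R M] (i : ℕ) : Type u :=
  Abelian.Ext (ModuleCat.of R M) (ModuleCat.of R R) i

variable {R}
variable {M₁ M₂ M₃ : Type u} [AddCommGroup M₁] [Module R M₁] [AddCommGroup M₂] [Module R M₂]
  [AddCommGroup M₃] [Module R M₃]

/-- contravariant functoriality -/
def emap (f : M₁ →ₗ[R] M₂) (i : ℕ) : E R M₂ i →ₗ[R] E R M₁ i :=
  (Abelian.Ext.mk₀ (ModuleCat.ofHom f)).precompOfLinear R (ModuleCat.of R R) (zero_add i)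

lemma emap_apply (f : M₁ →ₗ[R] M₂) (i : ℕ) (x : E R M₂ i) :
    emap f i x = (Abelian.Ext.mk₀ (ModuleCat.ofHom f)).comp x (zero_add i) := rfl

lemma emap_comp (f : M₁ →ₗ[R] M₂) (g : M₂ →ₗ[R] M₃) (i : ℕ) (x : E R M₃ i) :
    emap (g.comp f) i x = emap f i (emap g i x) := by
  simp [emap_apply, ModuleCat.ofHom_comp]

lemma emap_id (i : ℕ) (x : E R M₁ i) : emap (LinearMap.id : M₁ →ₗ[R] M₁) i x = x := by
  simp [emap_apply]

lemma emap_smul_id (r : R) (i : ℕ) (x : E R M₁ i) :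
    emap (r • LinearMap.id : M₁ →ₗ[R] M₁) i x = r • x := by
  have : ModuleCat.ofHom (r • LinearMap.id : M₁ →ₗ[R] M₁) = r • 𝟙 (ModuleCat.of R M₁) := rfl
  simp [emap_apply, this, Abelian.Ext.mk₀_smul]

lemma emap_zero (i : ℕ) (x : E R M₂ i) : emap (0 : M₁ →ₗ[R] M₂) i x = 0 := by
  have : ModuleCat.ofHom (0 : M₁ →ₗ[R] M₂) = 0 := rfl
  simp [emap_apply, this]

/-- iso invariance -/
def econgr (e : M₁ ≃ₗ[R] M₂) (i : ℕ) : E R M₂ i ≃ₗ[R] E R M₁ i :=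
  LinearEquiv.ofLinearMap (emap e.toLinearMap i) (emap e.symm.toLinearMap i)
    (by ext x; simp [← emap_comp, emap_id]) (by ext x; simp [← emap_comp, emap_id])

lemma les {f : M₁ →ₗ[R] M₂} {g : M₂ →ₗ[R] M₃} (hf : Function.Injective f)
    (hg : Function.Surjective g) (hfg : Function.Exact f g) (i : ℕ) :
    ∃ δ : E R M₁ i →ₗ[R] E R M₃ (i + 1),
      Function.Exact (emap g i) (emap f i) ∧ Function.Exact (emap f i) δ ∧
      Function.Exact δ (emap g (i + 1)) := by
  let S : ShortComplex (ModuleCat.{u} R) :=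
    ShortComplex.mk (ModuleCat.ofHom f) (ModuleCat.ofHom g) (by ext x; simp [hfg.apply_apply_eq_zero])
  have hS : S.ShortExact :=
    { exact := (ShortComplex.ShortExact.moduleCat_exact_iff_function_exact S).mpr hfg
      mono_f := (ModuleCat.mono_iff_injective _).mpr hf
      epi_g := (ModuleCat.epi_iff_surjective _).mpr hg }
  refine ⟨hS.extClass.precompOfLinear R (ModuleCat.of R R) (add_comm 1 i), ?_, ?_, ?_⟩
  · intro x
    refine ⟨fun h => Abelian.Ext.contravariant_sequence_exact₂ hS _ x h, ?_⟩
    rintro ⟨y, rfl⟩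
    rw [← emap_comp, hfg.linearMap_comp_eq_zero, emap_zero]
  · intro x
    refine ⟨fun h => Abelian.Ext.contravariant_sequence_exact₁ hS _ x (add_comm 1 i) h, ?_⟩
    rintro ⟨y, rfl⟩
    exact hS.extClass_comp_assoc y (h := add_comm 1 i)
  · intro x
    refine ⟨fun h => Abelian.Ext.contravariant_sequence_exact₃ hS _ x h (add_comm 1 i), ?_⟩
    rintro ⟨y, rfl⟩
    exact hS.comp_extClass_assoc y (h := add_comm 1 i)

lemma emap_zero_injective {g : M₂ →ₗ[R] M₃} (hg : Function.Surjective g) :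
    Function.Injective (emap g 0) := by
  have : Epi (ModuleCat.ofHom g) := (ModuleCat.epi_iff_surjective _).mpr hg
  exact Abelian.Ext.precomp_mk₀_injective_of_epi (ModuleCat.of R R) (ModuleCat.ofHom g)

lemma e_subsingleton_of_projective [Module.Projective R M₁] (i : ℕ) (hi : i ≠ 0) :
    Subsingleton (E R M₁ i) := by
  obtain ⟨j, rfl⟩ := Nat.exists_eq_succ_of_ne_zero hi
  have := (IsProjective.iff_projective M₁ (R := R)).mp inferInstance
  exact ⟨fun a b => by rw [Abelian.Ext.eq_zero_of_projective a, Abelian.Ext.eq_zero_of_projective b]⟩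

/-- `Ext^0 = Hom`. -/
def ehom : E R M₁ 0 ≃ₗ[R] (M₁ →ₗ[R] R) :=
  Abelian.Ext.linearEquiv₀.trans ModuleCat.homLinearEquiv

lemma ehom_emap (f : M₁ →ₗ[R] M₂) (x : E R M₂ 0) : ehom (emap f 0 x) = (ehom x).comp f := by
  obtain ⟨x, rfl⟩ := (ehom (M₁ := M₂)).symm.surjective x
  apply ehom.symm.injective
  simp only [LinearEquiv.symm_apply_apply, LinearEquiv.apply_symm_apply]
  change (Abelian.Ext.mk₀ (ModuleCat.ofHom f)).comp (Abelian.Ext.mk₀ (ModuleCat.ofHom x)) (zero_add 0)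
    = Abelian.Ext.mk₀ (ModuleCat.ofHom (x.comp f))
  simp [ModuleCat.ofHom_comp]

end Basic

section Noeth

open scoped Pointwise

variable {R : Type u} [CommRing R]

lemma support_middle {M₁ M₂ M₃ : Type u} [AddCommGroup M₁] [Module R M₁] [AddCommGroup M₂]
    [Module R M₂] [AddCommGroup M₃] [Module R M₃] {f : M₁ →ₗ[R] M₂} {g : M₂ →ₗ[R] M₃}
    (hfg : Function.Exact f g) {q : PrimeSpectrum R} (hq : q ∈ Module.support R M₂) :
    q ∈ Module.support R M₁ ∨ q ∈ Module.support R M₃ := by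
  by_contra! h
  rw [Module.notMem_support_iff', Module.notMem_support_iff'] at h
  obtain ⟨h1, h3⟩ := h
  rw [Module.mem_support_iff'] at hq
  obtain ⟨m, hm⟩ := hq
  obtain ⟨r, hr, hr'⟩ := h3 (g m)
  rw [← map_smul] at hr'
  obtain ⟨y, hy⟩ := (hfg _).mp hr'
  obtain ⟨s, hs, hs'⟩ := h1 y
  refine hm (s * r) (fun h => (q.2.mem_or_mem h).elim hs hr) ?_
  rw [mul_smul, ← hy, ← map_smul, hs', map_zero]

lemma support_e_subset (M : Type u) [AddCommGroup M] [Module R M] [Module.Finite R M] (i : ℕ) :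
    Module.support R (E R M i) ⊆ Module.support R M := by
  intro p hp
  rw [Module.mem_support_iff_of_finite]
  refine le_trans ?_ (Module.annihilator_le_of_mem_support hp)
  intro r hr
  rw [Module.mem_annihilator] at hr ⊢
  intro x
  have : (r • LinearMap.id : M →ₗ[R] M) = 0 := by ext m; simpa using hr m
  rw [← emap_smul_id, this, emap_zero]

/-- short exact sequence for a regular element -/
lemma les_regular (M : Type u) [AddCommGroup M] [Module R M] {x : R} (hx : IsSMulRegular M x)
    (i : ℕ) :
    ∃ δ : E R M i →ₗ[R] E R (QuotSMulTop x M) (i + 1),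
      (∀ y, δ y = 0 ↔ ∃ z, x • z = y) ∧
      Function.Exact δ (emap (Submodule.mkQ (x • (⊤ : Submodule R M))) (i + 1)) ∧
      (∀ j, ∀ y : E R M j, x • y = 0 ↔ ∃ z, emap (Submodule.mkQ (x • (⊤ : Submodule R M))) j z = y) := by
  have key (j : ℕ) := les (R := R) (f := (x • LinearMap.id : M →ₗ[R] M))
    (g := Submodule.mkQ (x • (⊤ : Submodule R M))) (fun a b h => hx (by simpa using h))
    (Submodule.mkQ_surjective _) (by
      intro m
      rw [Submodule.mkQ_apply, Submodule.Quotient.mk_eq_zero, Submodule.mem_smul_pointwise_iff_exists]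
      simp) j
  obtain ⟨δ, h1, h2, h3⟩ := key i
  refine ⟨δ, ?_, h3, ?_⟩
  · intro y
    rw [h2 y]
    simp [emap_smul_id]
  · intro j y
    obtain ⟨-, h, -⟩ := key j
    rw [← emap_smul_id, h y]
    simp

lemma mem_support_quot (P Q : PrimeSpectrum R) :
    Q ∈ Module.support R (R ⧸ P.asIdeal) ↔ P ≤ Q := by
  rw [Module.support_eq_zeroLocus, Ideal.annihilator_quotient]
  exact Iff.rfl

variable [IsNoetherianRing R]

lemma exists_prime_of_mem_support (M : Type u) [AddCommGroup M] [Module R M] [h : Module.Finite R M]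
    (i : ℕ) (q : PrimeSpectrum R) (hq : q ∈ Module.support R (E R M i)) :
    ∃ Q ∈ Module.support R M, q ∈ Module.support R (E R (R ⧸ Q.asIdeal) i) := by
  induction h using IsNoetherianRing.induction_on_isQuotientEquivQuotientPrime R with
  | subsingleton N =>
    have := support_e_subset N i hq
    simp [Module.support_eq_empty] at this
  | quotient N p e =>
    refine ⟨p, ?_, ?_⟩
    · rw [e.support_eq, Module.support_eq_zeroLocus, Ideal.annihilator_quotient]
      exact le_refl p.asIdeal
    · rwa [(econgr e i).support_eq]
  | exact N₁ N₂ N₃ f g hf hg hfg h₁ h₃ =>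
    obtain ⟨-, h, -⟩ := les hf hg hfg i
    rcases support_middle h hq with h | h
    · obtain ⟨Q, hQ, hQ'⟩ := h₃ h
      exact ⟨Q, Module.support_subset_of_surjective g hg hQ, hQ'⟩
    · obtain ⟨Q, hQ, hQ'⟩ := h₁ h
      exact ⟨Q, Module.support_subset_of_injective f hf hQ, hQ'⟩

lemma bass (P Q : PrimeSpectrum R) (i : ℕ) (hlt : P < Q)
    (h : Q ∈ Module.support R (E R (R ⧸ P.asIdeal) i)) :
    ∃ Q' : PrimeSpectrum R, P < Q' ∧ Q' ≤ Q ∧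
      Q ∈ Module.support R (E R (R ⧸ Q'.asIdeal) (i + 1)) := by
  obtain ⟨x, hxQ, hxP⟩ := SetLike.exists_of_lt (show P.asIdeal < Q.asIdeal from hlt)
  have hreg : IsSMulRegular (R ⧸ P.asIdeal) x := by
    have hx0 : Ideal.Quotient.mk P.asIdeal x ≠ 0 := by
      rwa [Ne, Ideal.Quotient.eq_zero_iff_mem]
    intro a b hab
    simp only [Algebra.smul_def] at hab
    exact mul_left_cancel₀ hx0 hab
  obtain ⟨δ, h1, -, -⟩ := les_regular _ hreg i
  have hQ : Q ∈ Module.support R (QuotSMulTop x (E R (R ⧸ P.asIdeal) i)) := by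
    rw [Module.support_quotSMulTop]
    exact ⟨h, by simpa using hxQ⟩
  have hker : x • (⊤ : Submodule R (E R (R ⧸ P.asIdeal) i)) = LinearMap.ker δ := by
    ext y
    rw [LinearMap.mem_ker, h1, Submodule.mem_smul_pointwise_iff_exists]
    simp
  have hQ2 : Q ∈ Module.support R (E R (QuotSMulTop x (R ⧸ P.asIdeal)) (i + 1)) := by
    refine Module.support_subset_of_injective
      ((x • (⊤ : Submodule R (E R (R ⧸ P.asIdeal) i))).liftQ δ hker.le) ?_ hQ
    rw [← LinearMap.ker_eq_bot, Submodule.ker_liftQ_eq_bot _ _ _ hker.ge]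
  obtain ⟨Q', hQ', hQ''⟩ := exists_prime_of_mem_support _ _ _ hQ2
  rw [Module.support_quotSMulTop] at hQ'
  have hPQ' := (mem_support_quot P Q').mp hQ'.1
  have hxQ' : x ∈ Q'.asIdeal := by simpa using hQ'.2
  refine ⟨Q', lt_of_le_of_ne hPQ' ?_, ?_, hQ''⟩
  · rintro rfl; exact hxP hxQ'
  · exact (mem_support_quot Q' Q).mp (support_e_subset _ _ hQ'')

lemma mem_support_of_height (h : ℕ) (Q : PrimeSpectrum R) (hQ : Order.height Q = h) :
    Q ∈ Module.support R (E R (R ⧸ Q.asIdeal) h) := by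
  induction h generalizing Q with
  | zero =>
    have hmin : IsMin Q := by simpa using hQ
    have hQm : Q.asIdeal ∈ minimalPrimes R := by
      rw [minimalPrimes_eq_minimals]
      exact ⟨Q.2, fun p hp hle => hmin (b := ⟨p, hp⟩) hle⟩
    have hass : Q.asIdeal ∈ associatedPrimes R R := by
      apply Module.associatedPrimes.minimalPrimes_annihilator_subset_associatedPrimes R R
      rwa [(Module.annihilator_eq_bot (R := R) (M := R)).mpr inferInstance]
    obtain ⟨-, a, ha⟩ := isAssociatedPrime_iff.mp (AssociatedPrimes.mem_iff.mp hass)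
    rw [(ehom (R := R) (M₁ := R ⧸ Q.asIdeal)).support_eq, Module.mem_support_iff']
    refine ⟨Submodule.liftQ _ (LinearMap.toSpanSingleton R R a) ?_, ?_⟩
    · rw [ha]; intro r hr; simpa using hr
    · intro r hr h0
      apply hr
      have := LinearMap.congr_fun h0 (Submodule.Quotient.mk 1)
      rw [LinearMap.smul_apply, Submodule.liftQ_apply] at this
      rw [ha]
      simpa using this
  | succ h ih =>
    obtain ⟨P, hPQ, hP⟩ : ∃ P < Q, Order.height P = h := by
      have := (Order.height_eq_coe_add_one_iff (x := Q) (n := h)).mp (by simpa using hQ)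
      exact this.2.1
    have h1 := Module.mem_support_mono hPQ.le (ih P hP)
    obtain ⟨Q', hPQ', hQQ', hs⟩ := bass P Q h hPQ h1
    rcases hQQ'.eq_or_lt with rfl | hlt
    · exact hs
    · exfalso
      have a1 : (h : ℕ∞) + 1 ≤ Order.height Q' := by
        rw [← hP]; exact Order.height_add_one_le hPQ'
      have a2 := Order.height_add_one_le hlt
      rw [hQ] at a2
      have := (add_le_add_left a1 1).trans a2
      norm_cast at this
      omega

end Noeth

section Local

open scoped Pointwise
open IsLocalRing

variable {A : Type u} [CommRing A] [IsNoetherianRing A]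

lemma e_subsingleton_of_primes (i : ℕ) (M : Type u) [AddCommGroup M] [Module A M]
    [Module.Finite A M]
    (h : ∀ P ∈ Module.support A M, Subsingleton (E A (A ⧸ P.asIdeal) i)) :
    Subsingleton (E A M i) := by
  by_contra hM
  rw [not_subsingleton_iff_nontrivial] at hM
  obtain ⟨q, hq⟩ := Module.nonempty_support_of_nontrivial (R := A) (M := E A M i)
  obtain ⟨Q, hQ, hQ'⟩ := exists_prime_of_mem_support M i q hq
  have := h Q hQ
  simp [Module.support_eq_empty] at hQ'

variable [IsLocalRing A]

variable (A) in
/-- The residue field as a module. -/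
abbrev kk : Type u := A ⧸ (closedPoint A).asIdeal

lemma kk_simple : IsSimpleModule A (kk A) := by
  rw [isSimpleModule_iff_quot_maximal]
  exact ⟨maximalIdeal A, inferInstance, ⟨LinearEquiv.refl _ _⟩⟩

lemma embeds_or_regular (M : Type u) [AddCommGroup M] [Module A M] [Module.Finite A M] :
    (∃ f : kk A →ₗ[A] M, Function.Injective f) ∨ ∃ x ∈ maximalIdeal A, IsSMulRegular M x := by
  by_cases h : Subsingleton (kk A →ₗ[A] M)
  · right
    obtain ⟨r, hr, hr'⟩ := IsSMulRegular.subsingleton_linearMap_iff.mp h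
    rw [Ideal.annihilator_quotient] at hr
    exact ⟨r, hr, hr'⟩
  · left
    rw [not_subsingleton_iff_nontrivial] at h
    obtain ⟨f, hf⟩ := exists_ne (0 : kk A →ₗ[A] M)
    have := kk_simple (A := A)
    exact ⟨f, (LinearMap.injective_or_eq_zero f).resolve_right hf⟩

lemma exists_surj (M : Type u) [AddCommGroup M] [Module A M] [Module.Finite A M] [Nontrivial M] :
    ∃ g : M →ₗ[A] kk A, Function.Surjective g := by
  obtain ⟨N, hN, -⟩ := (eq_top_or_exists_le_coatom (⊥ : Submodule A M)).resolve_left bot_ne_top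
  have : IsSimpleModule A (M ⧸ N) := isSimpleModule_iff_isCoatom.mpr hN
  obtain ⟨I, hI, ⟨e⟩⟩ := isSimpleModule_iff_quot_maximal.mp this
  obtain rfl := eq_maximalIdeal hI
  exact ⟨e.toLinearMap.comp N.mkQ, e.surjective.comp N.mkQ_surjective⟩

/-- `Ext` concentrated in degree `j`, where it is isomorphic to the module. -/
def Conc (M : Type u) [AddCommGroup M] [Module A M] (j : ℕ) : Prop :=
  (∀ i, i ≠ j → Subsingleton (E A M i)) ∧ Nonempty (E A M j ≃ₗ[A] M)

omit [IsNoetherianRing A] [IsLocalRing A] in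
lemma Conc.quot {M : Type u} [AddCommGroup M] [Module A M] {j : ℕ} (h : Conc (A := A) M j) {x : A}
    (hx : IsSMulRegular M x) : Conc (A := A) (QuotSMulTop x M) (j + 1) := by
  obtain ⟨h1, ⟨e⟩⟩ := h
  have hxj : IsSMulRegular (E A M j) x := by
    intro a b hab
    apply e.injective
    apply hx
    simp only at hab ⊢
    rw [← map_smul, ← map_smul, hab]
  have zero_of (i : ℕ) (y : E A (QuotSMulTop x M) i) :
      emap (Submodule.mkQ (x • (⊤ : Submodule A M))) i y = 0 := by
    by_cases hi : i = j
    · subst hi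
      obtain ⟨δ, -, -, h3⟩ := les_regular M hx i
      have := (h3 i (emap (Submodule.mkQ (x • (⊤ : Submodule A M))) i y)).mpr ⟨y, rfl⟩
      exact hxj (by simpa using this)
    · have := h1 i hi
      exact Subsingleton.elim _ _
  constructor
  · intro i hi
    refine subsingleton_of_forall_eq 0 fun y => ?_
    cases i with
    | zero =>
      apply emap_zero_injective (Submodule.mkQ_surjective (x • (⊤ : Submodule A M)))
      rw [zero_of, map_zero]
    | succ i =>
      obtain ⟨δ, -, h2, -⟩ := les_regular M hx i
      obtain ⟨z, rfl⟩ := (h2 y).mp (zero_of _ y)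
      have := h1 i (by omega)
      rw [Subsingleton.elim z 0, map_zero]
  · obtain ⟨δ, h2, h3, -⟩ := les_regular M hx j
    have hsurj : Function.Surjective δ := fun y => (h3 y).mp (zero_of _ y)
    have e1 := δ.quotKerEquivOfSurjective hsurj
    refine ⟨e1.symm.trans (Submodule.Quotient.equiv _ _ e ?_)⟩
    ext m
    simp only [Submodule.mem_map, LinearMap.mem_ker, h2, Submodule.mem_smul_pointwise_iff_exists]
    constructor
    · rintro ⟨y, ⟨z, rfl⟩, rfl⟩
      exact ⟨e z, trivial, by simp⟩
    · rintro ⟨z, -, rfl⟩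
      exact ⟨x • e.symm z, ⟨_, rfl⟩, by simp⟩

omit [IsNoetherianRing A] [IsLocalRing A] in
lemma conc_self : Conc (A := A) A 0 :=
  ⟨fun i hi => e_subsingleton_of_projective i hi,
    ⟨ehom.trans (LinearMap.ringLmapEquivSelf A A A)⟩⟩

lemma exists_conc (e j : ℕ) (M : Type u) [AddCommGroup M] [Module A M] [Module.Finite A M]
    [Nontrivial M] (hM : Conc (A := A) M j) (hdim : Module.supportDim A M = (e : WithBot ℕ∞)) :
    ∃ (M' : Type u) (_ : AddCommGroup M') (_ : Module A M') (j' e' : ℕ), Module.Finite A M' ∧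
      Nontrivial M' ∧ Conc (A := A) M' j' ∧ (∃ f : kk A →ₗ[A] M', Function.Injective f) ∧
      Module.supportDim A M' = (e' : WithBot ℕ∞) ∧ e' + j' = e + j := by
  induction e generalizing M j with
  | zero =>
    rcases embeds_or_regular (A := A) M with h | ⟨x, hx, hreg⟩
    · exact ⟨M, _, _, j, 0, inferInstance, inferInstance, hM, h, hdim, rfl⟩
    · exfalso
      have := Module.supportDim_quotSMulTop_succ_eq_supportDim hreg hx
      rw [hdim] at this
      have hnt : Nontrivial (QuotSMulTop x M) := by
        rw [← Module.nonempty_support_iff (R := A), Module.support_quotSMulTop]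
        exact ⟨closedPoint A, closedPoint_mem_support A M, by
          rw [PrimeSpectrum.mem_zeroLocus, Set.singleton_subset_iff]; exact hx⟩
      have h2 := (Module.supportDim_ne_bot_iff_nontrivial A (QuotSMulTop x M)).mpr hnt
      generalize Module.supportDim A (QuotSMulTop x M) = s at *
      cases s with
      | bot => exact h2 rfl
      | coe s =>
        norm_cast at this
        simp at this
  | succ e ih =>
    rcases embeds_or_regular (A := A) M with h | ⟨x, hx, hreg⟩
    · exact ⟨M, _, _, j, e + 1, inferInstance, inferInstance, hM, h, hdim, rfl⟩
    · have := Module.supportDim_quotSMulTop_succ_eq_supportDim hreg hx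
      rw [hdim] at this
      have hnt : Nontrivial (QuotSMulTop x M) := by
        rw [← Module.nonempty_support_iff (R := A), Module.support_quotSMulTop]
        exact ⟨closedPoint A, closedPoint_mem_support A M, by
          rw [PrimeSpectrum.mem_zeroLocus, Set.singleton_subset_iff]; exact hx⟩
      have h2 : Module.supportDim A (QuotSMulTop x M) = (e : WithBot ℕ∞) := by
        generalize Module.supportDim A (QuotSMulTop x M) = s at *
        cases s with
        | bot =>
          rw [WithBot.bot_add] at this
          exact absurd this.symm (WithBot.coe_ne_bot (a := ((e + 1 : ℕ) : ℕ∞)))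
        | coe s =>
          cases s with
          | top => norm_cast at this
          | coe s =>
          norm_cast at this ⊢
          omega
      obtain ⟨M', i1, i2, j', e', a1, a2, a3, a4, a5, a6⟩ := ih (j + 1) _ (hM.quot hreg) h2
      exact ⟨M', i1, i2, j', e', a1, a2, a3, a4, a5, by omega⟩

theorem local_main (hinj : ∃ n : ℕ, ∀ (M : Type u) [AddCommGroup M] [Module A M] (i : ℕ), n < i →
      Subsingleton (E A M i)) (d : ℕ) (hd : Order.height (closedPoint A) = d) :
    (∀ (M : Type u) [AddCommGroup M] [Module A M] [Module.Finite A M] (i : ℕ), d < i →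
      Subsingleton (E A M i)) ∧
    (∀ (M : Type u) [AddCommGroup M] [Module A M] [Module.Finite A M],
      Module.support A M = {closedPoint A} → ∀ i, Nontrivial (E A M i) ↔ i = d) := by
  classical
  obtain ⟨b, hb⟩ := hinj
  let Pr : ℕ → Prop := fun i => ∃ P : PrimeSpectrum A, Nontrivial (E A (A ⧸ P.asIdeal) i)
  have hPb (i) (hi : Pr i) : i ≤ b := by
    obtain ⟨P, hP⟩ := hi
    by_contra! hlt
    have := hb (A ⧸ P.asIdeal) i hlt
    exact not_subsingleton (E A (A ⧸ P.asIdeal) i) this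
  have hPd : Pr d := ⟨closedPoint A, (Module.nonempty_support_iff (R := A)).mp
    ⟨_, mem_support_of_height d (closedPoint A) hd⟩⟩
  let n := Nat.findGreatest Pr b
  have hPn : Pr n := Nat.findGreatest_spec (hPb d hPd) hPd
  have hdn : d ≤ n := Nat.le_findGreatest (hPb d hPd) hPd
  have hgt (i) (hi : n < i) : ¬ Pr i := fun h =>
    absurd (Nat.le_findGreatest (hPb i h) h) (by omega)
  have hvan (M : Type u) [AddCommGroup M] [Module A M] [Module.Finite A M] (i : ℕ) (hi : n < i) :
      Subsingleton (E A M i) := by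
    apply e_subsingleton_of_primes
    intro P _
    by_contra hc
    exact hgt i hi ⟨P, not_subsingleton_iff_nontrivial.mp hc⟩
  have hkn : Nontrivial (E A (kk A) n) := by
    obtain ⟨P, hP⟩ := hPn
    rcases (show P ≤ closedPoint A from le_maximalIdeal P.2.ne_top).eq_or_lt with rfl | hlt
    · exact hP
    · exfalso
      obtain ⟨Q', -, -, hQ'⟩ := bass P (closedPoint A) n hlt (closedPoint_mem_support A _)
      exact hgt (n + 1) (by omega) ⟨Q', (Module.nonempty_support_iff (R := A)).mp ⟨_, hQ'⟩⟩
  have hemb (M : Type u) [AddCommGroup M] [Module A M] [Module.Finite A M]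
      (f : kk A →ₗ[A] M) (hf : Function.Injective f) : Nontrivial (E A M n) := by
    obtain ⟨δ, -, h2, -⟩ := les hf (LinearMap.range f).mkQ_surjective
      (by intro y; simp) n
    have := hvan (M ⧸ LinearMap.range f) (n + 1) (by omega)
    have hs : Function.Surjective (emap f n) := fun y => (h2 y).mp (Subsingleton.elim _ _)
    exact hs.nontrivial
  have hdimA : Module.supportDim A A = (d : WithBot ℕ∞) := by
    rw [Module.supportDim_self_eq_ringKrullDim, ← maximalIdeal_height_eq_ringKrullDim,
      show maximalIdeal A = (closedPoint A).asIdeal from rfl, PrimeSpectrum.height_eq_orderHeight, hd]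
    rfl
  obtain ⟨M', i1, i2, j', e', a1, a2, a3, ⟨f, hf⟩, a5, a6⟩ := exists_conc d 0 A conc_self hdimA
  have hj' : n = j' := by
    by_contra hne
    have h1 := a3.1 n hne
    have h2 := hemb M' f hf
    exact not_subsingleton (E A M' n) h1
  have hdn' : n = d := by omega
  clear_value n
  subst hdn'
  obtain rfl : e' = 0 := by omega
  subst hj'
  have hsupp' : Module.support A M' = {closedPoint A} := by
    rw [support_of_supportDim_eq_zero A M' (by simpa using a5)]
    exact PrimeSpectrum.zeroLocus_eq_singleton _
  have hsuppvan (i : ℕ) (hi : Subsingleton (E A (kk A) i)) (M : Type u) [AddCommGroup M]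
      [Module A M] [Module.Finite A M] (hM : Module.support A M ⊆ {closedPoint A}) :
      Subsingleton (E A M i) := by
    apply e_subsingleton_of_primes
    intro P hP
    obtain rfl := hM hP
    exact hi
  have hk (i : ℕ) : i < n → Subsingleton (E A (kk A) i) := by
    induction i with
    | zero =>
      intro hi
      obtain ⟨g, hg⟩ := exists_surj (A := A) M'
      have := a3.1 0 (by omega)
      exact (emap_zero_injective hg).subsingleton
    | succ i ih =>
      intro hi
      obtain ⟨g, hg⟩ := exists_surj (A := A) M'
      have h1 := a3.1 (i + 1) (by omega)
      have h2 : Subsingleton (E A (LinearMap.ker g) i) := by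
        apply hsuppvan i (ih (by omega))
        rw [← hsupp']
        exact Module.support_subset_of_injective _ (LinearMap.ker g).injective_subtype
      obtain ⟨δ, -, -, h3⟩ := les (LinearMap.ker g).injective_subtype hg
        (by intro y; simp) i
      refine subsingleton_of_forall_eq 0 fun y => ?_
      obtain ⟨z, rfl⟩ := (h3 y).mp (Subsingleton.elim _ _)
      rw [Subsingleton.elim z 0, map_zero]
  refine ⟨fun M _ _ _ i hi => hvan M i hi, fun M _ _ _ hM i => ⟨fun h => ?_, ?_⟩⟩
  · by_contra hne
    apply not_subsingleton (E A M i)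
    rcases lt_or_gt_of_ne hne with h' | h'
    · exact hsuppvan i (hk i h') M hM.le
    · exact hvan M i h'
  · rintro rfl
    rcases embeds_or_regular (A := A) M with ⟨f, hf⟩ | ⟨x, hx, hreg⟩
    · exact hemb M f hf
    · exfalso
      have hnt : Nontrivial M := by
        rw [← Module.nonempty_support_iff (R := A), hM]; simp
      have hann : x ∈ (Module.annihilator A M).radical := by
        rw [Ideal.radical_eq_sInf, Ideal.mem_sInf]
        rintro J ⟨hJ, hJp⟩
        have : (⟨J, hJp⟩ : PrimeSpectrum A) ∈ Module.support A M :=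
          Module.mem_support_iff_of_finite.mpr hJ
        rw [hM, Set.mem_singleton_iff] at this
        have h2 := congrArg PrimeSpectrum.asIdeal this
        simp only at h2
        rw [h2]
        exact hx
      obtain ⟨k, hk'⟩ := hann
      obtain ⟨m, hm⟩ := exists_ne (0 : M)
      apply hm
      apply hreg.pow k
      simp [Module.mem_annihilator.mp hk' m]

end Local

section Bridge

variable {R : Type u} [CommRing R] {X : ModuleCat.{u} R} (P : ProjectiveResolution X)
  (Y : ModuleCat.{u} R)

lemma extMk_zero_iff (f : P.complex.X 0 ⟶ Y) (hf : P.complex.d 1 0 ≫ f = 0) :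
    P.extMk f 1 rfl hf = 0 ↔ f = 0 := by
  constructor
  · intro h
    rw [← P.extEquivCohomologyClass.apply_eq_iff_eq,
      ProjectiveResolution.extEquivCohomologyClass_extMk,
      ProjectiveResolution.extEquivCohomologyClass_zero,
      CochainComplex.HomComplex.CohomologyClass.mk_eq_zero_iff,
      CochainComplex.HomComplex.Cocycle.toSingleMk_mem_coboundaries_iff _ _ _ _ _ 1 (by simp)] at h
    obtain ⟨g, hg⟩ := h
    have hz : P.cochainComplex.d (-((0:ℕ):ℤ)) 1 = 0 :=
      (P.cochainComplex.isZero_of_isStrictlyLE 0 1 (by simp)).eq_of_tgt _ _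
    rw [hz, Limits.zero_comp] at hg
    rw [← cancel_epi (P.cochainComplexXIso (-((0:ℕ):ℤ)) 0 rfl).hom, ← hg, Limits.comp_zero]
  · rintro rfl
    simp

lemma smul_extMk (n : ℕ) (f : P.complex.X n ⟶ Y) (r : R) (hf : P.complex.d (n + 1) n ≫ f = 0)
    (hf' : P.complex.d (n + 1) n ≫ (r • f) = 0) :
    r • P.extMk f (n + 1) rfl hf = P.extMk (r • f) (n + 1) rfl hf' := by
  rw [Abelian.Ext.smul_eq_comp_mk₀, ProjectiveResolution.extMk_comp_mk₀]
  congr 1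

/-- cocycles to Ext -/
def cocyc (n : ℕ) : LinearMap.ker ((P.complex.linearYonedaObj R Y).d n (n + 1)).hom →ₗ[R]
    Abelian.Ext X Y n where
  toFun f := P.extMk f.1 (n + 1) rfl f.2
  map_add' f g := (P.add_extMk _ _ _ _ _ _).symm
  map_smul' r f := by
    exact (smul_extMk P Y n f.1 r f.2 (r • f).2).symm

theorem bridge (X Y : ModuleCat.{u} R) (n : ℕ) :
    Nonempty (((_root_.Ext.{u} R (ModuleCat.{u} R) n).obj (op X)).obj Y ≃ₗ[R]
      Abelian.Ext X Y n) := by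
  let P := projectiveResolution X
  let C := P.complex.linearYonedaObj R Y
  have e1 := (P.isoExt (R := R) n Y).toLinearEquiv
  let i := (ComplexShape.up ℕ).prev n
  let S := C.sc' i n (n + 1)
  have e2 : C.homology n ≅ S.homology :=
    ShortComplex.homologyMapIso (C.isoSc' i n (n+1) rfl (CochainComplex.next ℕ n))
  have e3 := S.moduleCatHomologyIso
  let φ : LinearMap.ker S.g.hom →ₗ[R] Abelian.Ext X Y n := cocyc P Y n
  have hφ : Function.Surjective φ := by
    intro y
    obtain ⟨f, hf, rfl⟩ := P.extMk_surjective y (n+1) rfl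
    exact ⟨⟨f, hf⟩, rfl⟩
  have hker : LinearMap.range S.moduleCatToCycles = LinearMap.ker φ := by
    ext f
    rw [LinearMap.mem_ker, LinearMap.mem_range]
    change _ ↔ P.extMk f.1 (n + 1) rfl f.2 = 0
    obtain rfl | ⟨m, rfl⟩ : n = 0 ∨ ∃ m, n = m + 1 := by
      cases n with
      | zero => simp
      | succ m => right; exact ⟨m, rfl⟩
    · refine Iff.trans ?_ (extMk_zero_iff P Y f.1 f.2).symm
      have hz : S.f = 0 := C.shape _ _ (by simp)
      constructor
      · rintro ⟨x, rfl⟩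
        change S.f x = 0
        rw [hz]; rfl
      · intro h
        refine ⟨0, ?_⟩
        rw [map_zero]
        exact Subtype.ext h.symm
    · have hi : i = m := CochainComplex.prev_nat_succ m
      refine Iff.trans ?_ (P.extMk_eq_zero_iff f.1 (m + 1 + 1) rfl f.2 i (by rw [hi])).symm
      constructor
      · rintro ⟨x, rfl⟩
        exact ⟨x, rfl⟩
      · rintro ⟨x, hx⟩
        exact ⟨x, Subtype.ext hx⟩
  have e4 : (LinearMap.ker S.g.hom ⧸ LinearMap.range S.moduleCatToCycles) ≃ₗ[R]
      Abelian.Ext X Y n :=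
    (Submodule.quotEquivOfEq _ _ hker).trans (φ.quotKerEquivOfSurjective hφ)
  exact ⟨e1.trans (e2.toLinearEquiv.trans (e3.toLinearEquiv.trans e4))⟩

end Bridge

section Loc

variable {R : Type u} [CommRing R] [IsNoetherianRing R] (S : Submonoid R)

/-- localization of dual modules -/
def lam (N : Type u) [AddCommGroup N] [Module R N] :
    (N →ₗ[R] R) →ₗ[R] (LocalizedModule S N →ₗ[Localization S] Localization S) :=
  IsLocalizedModule.mapExtendScalars S (LocalizedModule.mkLinearMap S N)
    (Algebra.linearMap R (Localization S)) (Localization S)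

instance lam_loc (N : Type u) [AddCommGroup N] [Module R N] [Module.Finite R N] :
    IsLocalizedModule S (lam S N) := by
  have : Module.FinitePresentation R N := Module.finitePresentation_of_finite R N
  exact Module.FinitePresentation.isLocalizedModule_mapExtendScalars _ _ _ _

omit [IsNoetherianRing R] in
lemma lam_comp {K P : Type u} [AddCommGroup K] [Module R K] [AddCommGroup P] [Module R P]
    (f : K →ₗ[R] P) (φ : P →ₗ[R] R) :
    lam S K (φ.comp f) = (lam S P φ).comp (LocalizedModule.map S f) := by
  apply LinearMap.restrictScalars_injective R
  apply IsLocalizedModule.linearMap_ext S (LocalizedModule.mkLinearMap S K)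
    (Algebra.linearMap R (Localization S))
  ext x
  simp only [LinearMap.coe_comp, LinearMap.coe_restrictScalars, Function.comp_apply,
    LocalizedModule.mkLinearMap_apply, LocalizedModule.map_mk]
  have h1 := IsLocalizedModule.map_apply S (LocalizedModule.mkLinearMap S K)
    (Algebra.linearMap R (Localization S)) (φ.comp f) x
  have h2 := IsLocalizedModule.map_apply S (LocalizedModule.mkLinearMap S P)
    (Algebra.linearMap R (Localization S)) φ (f x)
  exact h1.trans h2.symm

omit [IsNoetherianRing R] in
lemma loc_congr {M M' : Type u} [AddCommGroup M] [Module R M] [AddCommGroup M'] [Module R M']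
    (e : M ≃ₗ[R] M') : Subsingleton (LocalizedModule S M) ↔ Subsingleton (LocalizedModule S M') := by
  simp only [LocalizedModule.subsingleton_iff]
  constructor
  · intro h m
    obtain ⟨r, hr, h⟩ := h (e.symm m)
    refine ⟨r, hr, e.symm.injective ?_⟩
    simpa using h
  · intro h m
    obtain ⟨r, hr, h⟩ := h (e m)
    refine ⟨r, hr, e.injective ?_⟩
    simpa using h

omit [IsNoetherianRing R] in
/-- first step: `Ext^1` vanishing by surjectivity -/
lemma ext_one {P N : Type u} [AddCommGroup P] [Module R P] [AddCommGroup N]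
    [Module R N] [Module.Projective R P] {K : Type u} [AddCommGroup K] [Module R K]
    {f : K →ₗ[R] P} {g : P →ₗ[R] N} (hf : Function.Injective f)
    (hg : Function.Surjective g) (hfg : Function.Exact f g) :
    ∃ δ : (K →ₗ[R] R) →ₗ[R] E R N 1, Function.Surjective δ ∧
      ∀ φ, δ φ = 0 ↔ ∃ ψ : P →ₗ[R] R, ψ.comp f = φ := by
  obtain ⟨δ, -, h2, h3⟩ := les hf hg hfg 0
  have := e_subsingleton_of_projective (R := R) (M₁ := P) 1 (by simp)
  refine ⟨δ.comp ehom.symm.toLinearMap, ?_, ?_⟩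
  · refine Function.Surjective.comp (g := δ) ?_ ehom.symm.surjective
    exact fun y => (h3 y).mp (Subsingleton.elim _ _)
  · intro φ
    refine (h2 _).trans ?_
    constructor
    · rintro ⟨x, hx⟩
      refine ⟨ehom x, ?_⟩
      rw [← ehom_emap, hx]
      simp
    · rintro ⟨ψ, rfl⟩
      refine ⟨ehom.symm ψ, ?_⟩
      apply ehom.injective
      rw [ehom_emap]
      simp

omit [IsNoetherianRing R] in
lemma ext_shift {P N : Type u} [AddCommGroup P] [Module R P] [AddCommGroup N]
    [Module R N] [Module.Projective R P] {K : Type u} [AddCommGroup K] [Module R K]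
    {f : K →ₗ[R] P} {g : P →ₗ[R] N} (hf : Function.Injective f)
    (hg : Function.Surjective g) (hfg : Function.Exact f g) (t : ℕ) :
    Nonempty (E R K (t + 1) ≃ₗ[R] E R N (t + 2)) := by
  obtain ⟨δ, -, h2, h3⟩ := les hf hg hfg (t + 1)
  have := e_subsingleton_of_projective (R := R) (M₁ := P) (t + 1) (by simp)
  have := e_subsingleton_of_projective (R := R) (M₁ := P) (t + 2) (by simp)
  refine ⟨LinearEquiv.ofBijective δ ⟨?_, fun y => (h3 y).mp (Subsingleton.elim _ _)⟩⟩
  rw [injective_iff_map_eq_zero]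
  intro y hy
  obtain ⟨z, rfl⟩ := (h2 y).mp hy
  rw [Subsingleton.elim z 0, map_zero]

theorem ext_loc (t : ℕ) (N : Type u) [AddCommGroup N] [Module R N] [Module.Finite R N] :
    Subsingleton (LocalizedModule S (E R N t)) ↔
      Subsingleton (E (Localization S) (LocalizedModule S N) t) := by
  induction t using Nat.strong_induction_on generalizing N with
  | _ t ih =>
  match t with
  | 0 =>
    rw [loc_congr S ehom, (IsLocalizedModule.iso S (lam S N)).toEquiv.subsingleton_congr,
      (ehom (R := Localization S) (M₁ := LocalizedModule S N)).toEquiv.subsingleton_congr]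
  | t + 1 =>
    obtain ⟨P, _, _, _, _, g, hg⟩ := Module.exists_finite_presentation R N
    let f := (LinearMap.ker g).subtype
    have hf : Function.Injective f := (LinearMap.ker g).injective_subtype
    have hfg : Function.Exact f g := by intro y; simp [f]
    have hf' : Function.Injective (LocalizedModule.map S f) :=
      IsLocalizedModule.map_injective S _ _ f hf
    have hg' : Function.Surjective (LocalizedModule.map S g) :=
      IsLocalizedModule.map_surjective S _ _ g hg
    have hfg' : Function.Exact (LocalizedModule.map S f) (LocalizedModule.map S g) :=
      LocalizedModule.map_exact S f g hfg
    have : Module.Projective (Localization S) (LocalizedModule S P) :=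
      Module.projective_of_isLocalizedModule S (LocalizedModule.mkLinearMap S P)
    match t with
    | 0 =>
      obtain ⟨δ, hδ, hδ'⟩ := ext_one hf hg hfg
      obtain ⟨δ₁, hδ₁, hδ₁'⟩ := ext_one hf' hg' hfg'
      rw [LocalizedModule.subsingleton_iff]
      constructor
      · intro h
        refine subsingleton_of_forall_eq 0 fun y => ?_
        obtain ⟨ψ, rfl⟩ := hδ₁ y
        rw [hδ₁']
        obtain ⟨⟨φ, s⟩, hφ⟩ := IsLocalizedModule.surj S (lam S (LinearMap.ker g)) ψ
        obtain ⟨r, hr, h0⟩ := h (δ φ)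
        rw [← map_smul, hδ'] at h0
        obtain ⟨φ', hφ'⟩ := h0
        have hu : IsUnit (algebraMap R (Localization S) (r * s)) :=
          IsLocalization.map_units _ ((⟨r, hr⟩ : S) * s)
        obtain ⟨u, hu⟩ := hu
        refine ⟨(↑u⁻¹ : Localization S) • lam S P φ', ?_⟩
        rw [LinearMap.smul_comp, ← lam_comp, hφ', map_smul, ← hφ]
        simp only [Submonoid.smul_def]
        rw [smul_smul, ← algebraMap_smul (Localization S) (r * s : R) ψ, ← hu, smul_smul]
        simp
      · intro h m
        obtain ⟨φ, rfl⟩ := hδ m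
        obtain ⟨ψ, hψ⟩ := (hδ₁' (lam S _ φ)).mp (Subsingleton.elim _ _)
        obtain ⟨⟨φ', s⟩, hφ'⟩ := IsLocalizedModule.surj S (lam S P) ψ
        have : lam S _ (s • φ) = lam S _ (φ'.comp f) := by
          rw [lam_comp, ← hφ']
          simp only [Submonoid.smul_def, map_smul]
          rw [← hψ]
          rfl
        obtain ⟨c, hc⟩ := (IsLocalizedModule.eq_iff_exists S (lam S _)).mp this
        refine ⟨c * s, (c * s).2, ?_⟩
        rw [← map_smul, hδ']
        refine ⟨c • φ', ?_⟩
        rw [mul_smul]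
        exact hc.symm
    | t + 1 =>
      obtain ⟨e⟩ := ext_shift hf hg hfg t
      obtain ⟨e'⟩ := ext_shift hf' hg' hfg' t
      rw [← loc_congr S e, ih (t + 1) (by omega), e'.toEquiv.subsingleton_congr]

theorem ext_mem_support (t : ℕ) (N : Type u) [AddCommGroup N] [Module R N] [Module.Finite R N]
    (p : PrimeSpectrum R) : p ∈ Module.support R (E R N t) ↔
      Nontrivial (E (Localization.AtPrime p.asIdeal)
        (LocalizedModule p.asIdeal.primeCompl N) t) := by
  rw [Module.mem_support_iff, ← not_subsingleton_iff_nontrivial, ← not_subsingleton_iff_nontrivial,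
    ext_loc]

end Loc

section Assembly

variable {R : Type u} [CommRing R]

lemma support_loc_min [IsNoetherianRing R] (N : Type u) [AddCommGroup N] [Module R N]
    [Module.Finite R N]
    (p : PrimeSpectrum R) (hp : p ∈ Module.support R N)
    (hmin : ∀ q ∈ Module.support R N, q ≤ p → q = p) :
    Module.support (Localization.AtPrime p.asIdeal) (LocalizedModule p.asIdeal.primeCompl N) =
      {IsLocalRing.closedPoint (Localization.AtPrime p.asIdeal)} := by
  have hnt : Nontrivial (LocalizedModule p.asIdeal.primeCompl N) := Module.mem_support_iff.mp hp
  refine Set.Subset.antisymm ?_ ?_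
  · intro Q hQ
    rw [Set.mem_singleton_iff]
    obtain ⟨m, hm⟩ := Module.mem_support_iff_exists_annihilator.mp hQ
    induction m using LocalizedModule.induction_on with
    | _ n s =>
    let q : PrimeSpectrum R :=
      PrimeSpectrum.comap (algebraMap R (Localization.AtPrime p.asIdeal)) Q
    have hq : q ∈ Module.support R N := by
      rw [Module.mem_support_iff_exists_annihilator]
      refine ⟨n, fun r hr => ?_⟩
      change algebraMap R (Localization.AtPrime p.asIdeal) r ∈ Q.asIdeal
      apply hm
      rw [Submodule.mem_annihilator_span_singleton] at hr ⊢
      rw [algebraMap_smul, LocalizedModule.smul'_mk, hr, LocalizedModule.zero_mk]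
    have hqp : q ≤ p := by
      intro r hr
      by_contra hrp
      have hu : IsUnit (algebraMap R (Localization.AtPrime p.asIdeal) r) :=
        IsLocalization.map_units _ (⟨r, hrp⟩ : p.asIdeal.primeCompl)
      exact Q.2.ne_top (Ideal.eq_top_of_isUnit_mem _ hr hu)
    have hqe := hmin q hq hqp
    apply le_antisymm
    · exact IsLocalRing.le_maximalIdeal Q.2.ne_top
    · change IsLocalRing.maximalIdeal (Localization.AtPrime p.asIdeal) ≤ Q.asIdeal
      rw [← Localization.AtPrime.map_eq_maximalIdeal, Ideal.map_le_iff_le_comap]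
      exact (congrArg PrimeSpectrum.asIdeal hqe).ge
  · rw [Set.singleton_subset_iff]
    exact IsLocalRing.closedPoint_mem_support _ _

lemma height_loc (p : PrimeSpectrum R) :
    Order.height (IsLocalRing.closedPoint (Localization.AtPrime p.asIdeal)) = Order.height p := by
  have h1 := IsLocalization.AtPrime.ringKrullDim_eq_height p.asIdeal (Localization.AtPrime p.asIdeal)
  rw [← IsLocalRing.maximalIdeal_height_eq_ringKrullDim] at h1
  have h2 := WithBot.coe_injective h1
  rw [PrimeSpectrum.height_eq_orderHeight] at h2
  rw [← h2]
  exact (PrimeSpectrum.height_eq_orderHeight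
    (IsLocalRing.closedPoint (Localization.AtPrime p.asIdeal))).symm

lemma local_gor [IsNoetherianRing R] (hGor : IsGorensteinRing R) (p : PrimeSpectrum R) :
    ∃ d : ℕ, Order.height p = d ∧
      (∀ (M : Type u) [AddCommGroup M] [Module (Localization.AtPrime p.asIdeal) M]
        [Module.Finite (Localization.AtPrime p.asIdeal) M] (i : ℕ), d < i →
      Subsingleton (E (Localization.AtPrime p.asIdeal) M i)) ∧
    (∀ (M : Type u) [AddCommGroup M] [Module (Localization.AtPrime p.asIdeal) M]
      [Module.Finite (Localization.AtPrime p.asIdeal) M],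
      Module.support (Localization.AtPrime p.asIdeal) M =
        {IsLocalRing.closedPoint (Localization.AtPrime p.asIdeal)} →
      ∀ i, Nontrivial (E (Localization.AtPrime p.asIdeal) M i) ↔ i = d) := by
  obtain ⟨hN, -, n, hn⟩ := hGor p.asIdeal
  have hfin : Order.height p ≠ ⊤ := by
    rw [← PrimeSpectrum.height_eq_orderHeight]
    exact Ideal.height_ne_top p.2.ne_top
  obtain ⟨d, hd⟩ := ENat.ne_top_iff_exists.mp hfin
  refine ⟨d, hd.symm, ?_⟩
  refine local_main ⟨n, fun M _ _ i hi => ?_⟩ d ((height_loc p).trans hd.symm)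
  obtain ⟨e⟩ := bridge (ModuleCat.of (Localization.AtPrime p.asIdeal) M)
    (ModuleCat.of (Localization.AtPrime p.asIdeal) (Localization.AtPrime p.asIdeal)) i
  have := hn (ModuleCat.of _ M) i hi
  exact e.symm.toEquiv.subsingleton

end Assembly

end GorExt

theorem stmt9 (R : Type u) [CommRing R] [IsNoetherianRing R] (hGor : IsGorensteinRing R)
    (N : Type u) [AddCommGroup N] [Module R N] [Module.Finite R N] (t : ℕ) :
    (Module.support R (extPow R N t) ⊆ Module.support R N ∧
      ∀ p : PrimeSpectrum R, p ∈ Module.support R (extPow R N t) →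
        (t : ℕ∞) ≤ Order.height p) ∧
    (∀ p : PrimeSpectrum R, p ∈ Module.support R N →
      (∀ q ∈ Module.support R N, q ≤ p → q = p) →
      (p ∈ Module.support R (extPow R N t) ↔ Order.height p = (t : ℕ∞))) := by
  obtain ⟨e⟩ := GorExt.bridge (ModuleCat.of R N) (ModuleCat.of R R) t
  have hs : Module.support R (extPow R N t) = Module.support R (GorExt.E R N t) := e.support_eq
  rw [hs]
  refine ⟨⟨GorExt.support_e_subset N t, fun p hp => ?_⟩, fun p hp hmin => ?_⟩
  · obtain ⟨d, hd, h1, -⟩ := GorExt.local_gor hGor p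
    rw [GorExt.ext_mem_support] at hp
    rw [hd]
    by_contra hlt
    rw [not_le, Nat.cast_lt] at hlt
    have := h1 (LocalizedModule p.asIdeal.primeCompl N) t hlt
    exact not_subsingleton _ this
  · obtain ⟨d, hd, -, h2⟩ := GorExt.local_gor hGor p
    rw [GorExt.ext_mem_support, h2 _ (GorExt.support_loc_min N p hp hmin), hd, Nat.cast_inj]
    exact eq_comm

end
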